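/- Let P be a set of 2n points in the plane in general position such that the complete geometric graph K(P) contains a crossing family of size n (a set of n pairwise crossing edges, necessarily a perfect matching of P), and let k ≥ 3 be an integer. Then the edge set of K(P) can be partitioned into ⌈n/(k−1)⌉ classes such that each class, viewed as a geometric graph on P, is k-quasi-plane; moreover every partition of the edge set of K(P) into k-quasi-plane classes uses at least ⌈n/(k−1)⌉ classes. -/

import Mathlib

/-- Points of the plane. -/
abbrev Pt : Type := ℝ × ℝ

/-- A finite point set is in general position if no three of its points are collinear. -/
def GenPos (P : Finset Pt) : Prop :=
  ∀ p ∈ P, ∀ q ∈ P, ∀ r ∈ P, p ≠ q → p ≠ r → q ≠ r →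
    ¬ Collinear ℝ ({p, q, r} : Set Pt)

/-- A finite point set is in convex position: general position and no point lies in the
convex hull of the others. -/
def ConvexPos (P : Finset Pt) : Prop :=
  GenPos P ∧ ∀ p ∈ P, p ∉ convexHull ℝ ((P.erase p : Finset Pt) : Set Pt)

/-- The edge set of the complete geometric graph on `P`: all unordered pairs of
distinct points of `P`. -/
def KEdges (P : Finset Pt) : Set (Sym2 Pt) :=
  {e | ∃ p ∈ P, ∃ q ∈ P, p ≠ q ∧ e = s(p, q)}

/-- Two edges cross: they share no endpoint and their open segments intersect. -/
def Cross (e f : Sym2 Pt) : Prop :=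
  (∀ x, x ∈ e → x ∉ f) ∧
    ∃ p q r s : Pt, e = s(p, q) ∧ f = s(r, s) ∧
      (openSegment ℝ p q ∩ openSegment ℝ r s).Nonempty

/-- A set of edges is `k`-plane if each of its edges crosses at most `k` other edges
of the set. -/
def KPlane (k : ℕ) (E : Set (Sym2 Pt)) : Prop :=
  ∀ e ∈ E, {f | f ∈ E ∧ Cross e f}.ncard ≤ k

/-- A set of edges is `k`-quasi-plane if it contains no `k` pairwise crossing edges. -/
def KQuasiPlane (k : ℕ) (E : Set (Sym2 Pt)) : Prop :=
  ¬ ∃ S : Finset (Sym2 Pt), ↑S ⊆ E ∧ S.card = k ∧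
      (S : Set (Sym2 Pt)).Pairwise Cross

/-- The set of crossing pairs (unordered) of a set of edges. -/
def CrossPairs (E : Set (Sym2 Pt)) : Set (Sym2 (Sym2 Pt)) :=
  {c | ∃ e ∈ E, ∃ f ∈ E, Cross e f ∧ c = s(e, f)}

/-- A crossing family in `K(P)`: a finite set of pairwise crossing edges of `K(P)`. -/
def CrossingFamily (P : Finset Pt) (S : Finset (Sym2 Pt)) : Prop :=
  ↑S ⊆ KEdges P ∧ (S : Set (Sym2 Pt)).Pairwise Cross

/-- `E` forms a spanning tree on the point set `P`: all edges are edges of `K(P)` and the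
corresponding graph on the points of `P` is connected and acyclic. -/
def IsSpanningTreeOn (P : Finset Pt) (E : Set (Sym2 Pt)) : Prop :=
  E ⊆ KEdges P ∧
    (SimpleGraph.fromRel (fun a b : {x // x ∈ P} => s((a : Pt), (b : Pt)) ∈ E)).IsTree

/-!
Around each edge `xx'` of the crossing family draw the double star made of `xx'`, the edges from
`x` to the points left of `x → x'`, and the edges from `x'` to the points left of `x' → x`. The two
stars lie on opposite sides of `xx'`, so a double star has no crossings. When two edges `xx'` and
`yy'` cross, either `y` is left of `x → x'` or `x` is left of `y → y'`; as the family is a perfect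
matching of `P`, the double stars therefore cover `K(P)`.

Both bounds now come from one pigeonhole count: a crossing family has at most `m` edges in each
`(m + 1)`-quasi-plane set, so at most `t * m` edges in a union of `t` such sets. Unions of `k - 1`
double stars are thus `k`-quasi-plane, and `c` classes that are `k`-quasi-plane cover at most
`c * (k - 1)` edges of the given crossing family.
-/

section Orientation

/-- Twice the signed area of the triangle `abc`, positive iff `c` lies strictly to the left of the
directed line `a → b`; it expresses the side conditions that define double stars. -/
def orient (a b c : Pt) : ℝ := (b.1 - a.1) * (c.2 - a.2) - (b.2 - a.2) * (c.1 - a.1)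

variable {a b c x x' y y' z : Pt}

theorem orient_swap_left (a b c : Pt) : orient b a c = -orient a b c := by
  unfold orient; ring

theorem orient_swap_right (a b c : Pt) : orient a c b = -orient a b c := by
  unfold orient; ring

theorem collinear_of_orient_eq_zero (h : orient a b c = 0) : Collinear ℝ ({a, b, c} : Set Pt) := by
  rcases eq_or_ne a b with rfl | hab
  · simpa using collinear_pair ℝ a c
  have hlen : (b.1 - a.1) ^ 2 + (b.2 - a.2) ^ 2 ≠ 0 := by
    contrapose! hab
    ext <;> nlinarith [sq_nonneg (b.1 - a.1), sq_nonneg (b.2 - a.2)]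
  -- The coordinate of `c` on the line `ab` is that of its orthogonal projection.
  have hc : c = (((b.1 - a.1) * (c.1 - a.1) + (b.2 - a.2) * (c.2 - a.2)) /
      ((b.1 - a.1) ^ 2 + (b.2 - a.2) ^ 2)) • (b - a) + a := by
    unfold orient at h
    ext
    · simp only [Prod.fst_add, Prod.smul_fst, Prod.fst_sub, smul_eq_mul]
      field_simp
      linear_combination -(b.2 - a.2) * h
    · simp only [Prod.snd_add, Prod.smul_snd, Prod.snd_sub, smul_eq_mul]
      field_simp
      linear_combination (b.1 - a.1) * h
  refine (collinear_iff_of_mem (p₀ := a) (Set.mem_insert a _)).2 ⟨b - a, ?_⟩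
  rintro p (rfl | rfl | rfl)
  · exact ⟨0, by simp⟩
  · exact ⟨1, by simp⟩
  · exact ⟨_, hc⟩

theorem GenPos.orient_ne_zero {P : Finset Pt} (hP : GenPos P) (ha : a ∈ P) (hb : b ∈ P)
    (hc : c ∈ P) (hab : a ≠ b) (hac : a ≠ c) (hbc : b ≠ c) : orient a b c ≠ 0 :=
  fun h => hP a ha b hb c hc hab hac hbc (collinear_of_orient_eq_zero h)

theorem exists_orient_eq_mul_of_mem_openSegment (hz : z ∈ openSegment ℝ a c) :
    ∃ t : ℝ, 0 < t ∧ ∀ b, orient a b z = t * orient a b c := by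
  obtain ⟨u, t, -, ht, hut, rfl⟩ := hz
  refine ⟨t, ht, fun b => ?_⟩
  obtain rfl : u = 1 - t := eq_sub_of_add_eq hut
  simp only [orient, Prod.fst_add, Prod.snd_add, Prod.smul_fst, Prod.smul_snd, smul_eq_mul]
  ring

theorem orient_pos_of_mem_openSegment (hz : z ∈ openSegment ℝ a c) (h : 0 < orient a b c) :
    0 < orient a b z := by
  obtain ⟨t, ht, hscale⟩ := exists_orient_eq_mul_of_mem_openSegment hz
  exact hscale b ▸ mul_pos ht h

theorem orient_pos_of_openSegment_inter_nonempty
    (h : (openSegment ℝ x x' ∩ openSegment ℝ y y').Nonempty) (hneg : orient x x' y < 0) :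
    0 < orient y y' x := by
  obtain ⟨z, hzx, hzy⟩ := h
  obtain ⟨t, ht, hxz⟩ := exists_orient_eq_mul_of_mem_openSegment hzx
  obtain ⟨s, hs, hyz⟩ := exists_orient_eq_mul_of_mem_openSegment hzy
  have hprop : s * orient y y' x = -(t * orient x x' y) :=
    calc s * orient y y' x = -orient y x z := by rw [hyz, orient_swap_right y y' x]; ring
      _ = orient x y z := by rw [orient_swap_left x y z, neg_neg]
      _ = -(t * orient x x' y) := by rw [hxz, orient_swap_right x x' y]; ring
  refine (mul_pos_iff_of_pos_left hs).1 ?_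
  rw [hprop]
  exact neg_pos.2 (mul_neg_of_pos_of_neg ht hneg)

end Orientation

section DoubleStar

variable {P : Finset Pt} {S : Finset (Sym2 Pt)} {m e f : Sym2 Pt} {p q x x' y y' : Pt}

theorem Cross.openSegment_inter_nonempty (h : Cross s(x, x') s(y, y')) :
    (openSegment ℝ x x' ∩ openSegment ℝ y y').Nonempty := by
  obtain ⟨-, p, q, r, s, hpq, hrs, hinter⟩ := h
  rcases Sym2.eq_iff.1 hpq with ⟨rfl, rfl⟩ | ⟨rfl, rfl⟩ <;>
    rcases Sym2.eq_iff.1 hrs with ⟨rfl, rfl⟩ | ⟨rfl, rfl⟩ <;>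
    simpa only [openSegment_symm ℝ x x', openSegment_symm ℝ y y'] using hinter

theorem not_cross_of_mem (he : x ∈ e) (hf : x ∈ f) : ¬ Cross e f :=
  fun h => h.1 x he hf

/-- The double star of the edge `m = xx'`: the edge `m` itself, the edges from `x` to points
strictly left of `x → x'`, and those from `x'` to points strictly left of `x' → x` (the second kind
arises because `m = s(x, x')` may be read in either direction). Endpoints range over the whole
plane; restricting to a point set `P` is left to the intersection with `KEdges P`. -/
def doubleStar (m : Sym2 Pt) : Set (Sym2 Pt) :=
  insert m {e | ∃ x x' y, m = s(x, x') ∧ e = s(x, y) ∧ 0 < orient x x' y}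

theorem exists_mem_of_mem_doubleStar (he : e ∈ doubleStar m) : ∃ x ∈ m, x ∈ e := by
  rcases he with rfl | ⟨x, x', y, rfl, rfl, -⟩
  · exact ⟨_, e.out_fst_mem, e.out_fst_mem⟩
  · exact ⟨x, Sym2.mem_mk_left x x', Sym2.mem_mk_left x y⟩

theorem not_cross_of_mem_doubleStar (he : e ∈ doubleStar m) (hf : f ∈ doubleStar m) :
    ¬ Cross e f := by
  rcases he with rfl | ⟨x, x', y, rfl, rfl, hy⟩
  · obtain ⟨x, hxe, hxf⟩ := exists_mem_of_mem_doubleStar hf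
    exact not_cross_of_mem hxe hxf
  rcases hf with rfl | ⟨w, w', v, hm, rfl, hv⟩
  · exact not_cross_of_mem (Sym2.mem_mk_left x y) (Sym2.mem_mk_left x x')
  rcases Sym2.eq_iff.1 hm with ⟨rfl, rfl⟩ | ⟨rfl, rfl⟩
  · exact not_cross_of_mem (Sym2.mem_mk_left x y) (Sym2.mem_mk_left x v)
  intro hcross
  obtain ⟨z, hzy, hzv⟩ := hcross.openSegment_inter_nonempty
  have hleft : 0 < orient x x' z := orient_pos_of_mem_openSegment hzy hy
  have hright : 0 < orient x' x z := orient_pos_of_mem_openSegment hzv hv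
  rw [orient_swap_left] at hright
  linarith

theorem kQuasiPlane_two_doubleStar (m : Sym2 Pt) : KQuasiPlane 2 (doubleStar m) := by
  rintro ⟨S, hS, hcard, hcross⟩
  obtain ⟨e, he, f, hf, hef⟩ := Finset.one_lt_card.1 (hcard ▸ one_lt_two)
  exact not_cross_of_mem_doubleStar (hS he) (hS hf) (hcross he hf hef)

theorem Cross.mem_doubleStar_or (h : Cross s(x, x') s(y, y')) (hxy : orient x x' y ≠ 0) :
    s(x, y) ∈ doubleStar s(x, x') ∨ s(x, y) ∈ doubleStar s(y, y') := by
  rcases hxy.lt_or_gt with hneg | hpos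
  · exact .inr (.inr ⟨y, y', x, rfl, Sym2.eq_swap,
      orient_pos_of_openSegment_inter_nonempty h.openSegment_inter_nonempty hneg⟩)
  · exact .inl (.inr ⟨x, x', y, rfl, rfl, hpos⟩)

theorem mk_mem_kEdges_iff : s(p, q) ∈ KEdges P ↔ p ∈ P ∧ q ∈ P ∧ p ≠ q := by
  refine ⟨?_, fun ⟨hp, hq, hpq⟩ => ⟨p, hp, q, hq, hpq, rfl⟩⟩
  rintro ⟨a, ha, b, hb, hab, h⟩
  rcases Sym2.eq_iff.1 h with ⟨rfl, rfl⟩ | ⟨rfl, rfl⟩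
  · exact ⟨ha, hb, hab⟩
  · exact ⟨hb, ha, hab.symm⟩

open scoped Classical in
theorem CrossingFamily.card_biUnion_toFinset (hS : CrossingFamily P S) :
    (S.biUnion Sym2.toFinset).card = 2 * S.card := by
  have hdisj : (S : Set (Sym2 Pt)).PairwiseDisjoint Sym2.toFinset := fun e he f hf hef =>
    Finset.disjoint_left.2 fun x hxe hxf =>
      (hS.2 he hf hef).1 x (Sym2.mem_toFinset.1 hxe) (Sym2.mem_toFinset.1 hxf)
  have htwo : ∀ e ∈ S, e.toFinset.card = 2 := by
    intro e he
    obtain ⟨p, -, q, -, hpq, rfl⟩ := hS.1 he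
    exact Sym2.card_toFinset_of_not_isDiag _ hpq
  rw [Finset.card_biUnion hdisj, Finset.sum_const_nat htwo, mul_comm]

theorem CrossingFamily.exists_mem_of_card_le (hS : CrossingFamily P S)
    (hcard : P.card ≤ 2 * S.card) (hx : x ∈ P) : ∃ e ∈ S, x ∈ e := by
  classical
  have hsub : S.biUnion Sym2.toFinset ⊆ P := by
    refine Finset.biUnion_subset.2 fun e he z hz => ?_
    obtain ⟨p, hp, q, hq, -, rfl⟩ := hS.1 he
    rcases Sym2.mem_iff.1 (Sym2.mem_toFinset.1 hz) with rfl | rfl <;> assumption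
  have hcover : S.biUnion Sym2.toFinset = P :=
    Finset.eq_of_subset_of_card_le hsub (hcard.trans_eq hS.card_biUnion_toFinset.symm)
  simpa only [← hcover, Finset.mem_biUnion, Sym2.mem_toFinset] using hx

theorem CrossingFamily.kEdges_subset_iUnion_doubleStar (hS : CrossingFamily P S) (hP : GenPos P)
    (hcard : P.card ≤ 2 * S.card) : KEdges P ⊆ ⋃ m : S, doubleStar m := by
  rintro _ ⟨x, hx, y, hy, hxy, rfl⟩
  obtain ⟨m, hm, hxm⟩ := hS.exists_mem_of_card_le hcard hx
  obtain ⟨l, hl, hyl⟩ := hS.exists_mem_of_card_le hcard hy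
  simp only [Set.mem_iUnion, Subtype.exists, exists_prop]
  rcases eq_or_ne m l with rfl | hml
  · exact ⟨m, hm, .inl ((Sym2.mem_and_mem_iff hxy).1 ⟨hxm, hyl⟩).symm⟩
  have hcross : Cross m l := hS.2 hm hl hml
  obtain ⟨x', rfl⟩ := Sym2.mem_iff_exists.1 hxm
  obtain ⟨y', rfl⟩ := Sym2.mem_iff_exists.1 hyl
  obtain ⟨-, hx', hxx'⟩ := mk_mem_kEdges_iff.1 (hS.1 hm)
  have hx'y : x' ≠ y := fun h => hcross.1 x' (Sym2.mem_mk_right x x') (h ▸ hyl)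
  rcases hcross.mem_doubleStar_or (hP.orient_ne_zero hx hx' hy hxx' hxy hx'y) with h | h
  · exact ⟨_, hm, h⟩
  · exact ⟨_, hl, h⟩

end DoubleStar

section QuasiPlane

variable {ι : Type*} {k m j N : ℕ} {E E' : Set (Sym2 Pt)} {S : Finset (Sym2 Pt)}

theorem KQuasiPlane.mono (h : KQuasiPlane k E) (hE : E' ⊆ E) : KQuasiPlane k E' :=
  fun ⟨S, hS, hcard, hcross⟩ => h ⟨S, hS.trans hE, hcard, hcross⟩

theorem KQuasiPlane.card_lt (h : KQuasiPlane k E) (hS : ↑S ⊆ E)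
    (hcross : (S : Set (Sym2 Pt)).Pairwise Cross) : S.card < k := by
  by_contra! hk
  obtain ⟨T, hTS, hT⟩ := Finset.exists_subset_card_eq hk
  have hTS' : (T : Set (Sym2 Pt)) ⊆ S := Finset.coe_subset.2 hTS
  exact h ⟨T, hTS'.trans hS, hT, hcross.mono hTS'⟩

theorem card_le_mul_of_subset_biUnion_kQuasiPlane {t : Finset ι} {D : ι → Set (Sym2 Pt)}
    (hD : ∀ i ∈ t, KQuasiPlane (m + 1) (D i)) (hS : ↑S ⊆ ⋃ i ∈ t, D i)
    (hcross : (S : Set (Sym2 Pt)).Pairwise Cross) : S.card ≤ t.card * m := by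
  classical
  have hpart : ∀ i ∈ t, (S.filter (· ∈ D i)).card ≤ m := fun i hi =>
    Nat.le_of_lt_succ <| (hD i hi).card_lt (fun _ he => (Finset.mem_filter.1 he).2)
      (hcross.mono (Finset.coe_subset.2 (Finset.filter_subset _ S)))
  have hcover : S ⊆ t.biUnion fun i => S.filter (· ∈ D i) := by
    intro e he
    obtain ⟨i, hi, hei⟩ := Set.mem_iUnion₂.1 (hS he)
    exact Finset.mem_biUnion.2 ⟨i, hi, Finset.mem_filter.2 ⟨he, hei⟩⟩
  exact (Finset.card_le_card hcover).trans (Finset.card_biUnion_le_card_mul t _ m hpart)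

theorem kQuasiPlane_biUnion {t : Finset ι} {D : ι → Set (Sym2 Pt)}
    (hD : ∀ i ∈ t, KQuasiPlane (j + 1) (D i)) (ht : t.card ≤ m) :
    KQuasiPlane (m * j + 1) (⋃ i ∈ t, D i) := by
  rintro ⟨S, hS, hcard, hcross⟩
  have hle : S.card ≤ m * j :=
    (card_le_mul_of_subset_biUnion_kQuasiPlane hD hS hcross).trans (Nat.mul_le_mul_right j ht)
  omega

theorem exists_map_fin_card_fiber_le [Fintype ι] (h : Fintype.card ι ≤ N * m) :
    ∃ c : ι → Fin N, ∀ i, (Finset.univ.filter (c · = i)).card ≤ m := by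
  obtain ⟨φ⟩ : Nonempty (ι ↪ Fin N × Fin m) :=
    Function.Embedding.nonempty_of_card_le (by simpa using h)
  refine ⟨fun a => (φ a).1, fun i => ?_⟩
  have hinj : Set.InjOn (fun a => (φ a).2)
      (Finset.univ.filter fun a => (φ a).1 = i : Finset ι) := by
    intro a ha b hb hab
    simp only [Finset.coe_filter, Finset.mem_univ, true_and, Set.mem_ofPred_eq] at ha hb
    exact φ.injective (Prod.ext (ha.trans hb.symm) hab)
  simpa using Finset.card_le_card_of_injOn _ (fun _ _ => Finset.mem_univ _) hinj

theorem exists_kQuasiPlane_partition [Fintype ι] {D : ι → Set (Sym2 Pt)}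
    (hD : ∀ a, KQuasiPlane (j + 1) (D a)) (hE : E ⊆ ⋃ a, D a) (h : Fintype.card ι ≤ N * m) :
    ∃ F : Fin N → Set (Sym2 Pt), (⋃ i, F i) = E ∧ (Pairwise fun i j => Disjoint (F i) (F j)) ∧
      ∀ i, KQuasiPlane (m * j + 1) (F i) := by
  obtain ⟨c, hc⟩ := exists_map_fin_card_fiber_le h
  let U : Fin N → Set (Sym2 Pt) := fun i => ⋃ a ∈ Finset.univ.filter (c · = i), D a
  have hU : E ⊆ ⋃ i, U i := fun e he => by
    obtain ⟨a, ha⟩ := Set.mem_iUnion.1 (hE he)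
    exact Set.mem_iUnion.2 ⟨c a, Set.mem_iUnion₂.2 ⟨a, by simp, ha⟩⟩
  refine ⟨disjointed fun i => E ∩ U i, ?_, disjoint_disjointed _, fun i => ?_⟩
  · rw [iUnion_disjointed, ← Set.inter_iUnion, Set.inter_eq_left.2 hU]
  · exact (kQuasiPlane_biUnion (fun a _ => hD a) (hc i)).mono
      ((disjointed_subset _ i).trans Set.inter_subset_right)

end QuasiPlane

theorem ceil_div_le_iff_le_mul {n m c : ℕ} (hm : 0 < m) : ⌈(n : ℝ) / m⌉₊ ≤ c ↔ n ≤ c * m := by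
  rw [Nat.ceil_le, div_le_iff₀ (Nat.cast_pos.2 hm)]
  norm_cast

theorem stmt_13_general (n : ℕ) (P : Finset Pt) (hP : GenPos P) (hcard : P.card = 2 * n)
    (hcf : ∃ S : Finset (Sym2 Pt), CrossingFamily P S ∧ S.card = n)
    (k : ℕ) (hk : 2 ≤ k) :
    (∃ F : Fin (⌈(n : ℝ) / ((k : ℝ) - 1)⌉₊) → Set (Sym2 Pt),
      (⋃ i, F i) = KEdges P ∧
      (Pairwise fun i j => Disjoint (F i) (F j)) ∧
      (∀ i, KQuasiPlane k (F i))) ∧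
    (∀ (c : ℕ) (F : Fin c → Set (Sym2 Pt)),
      KEdges P ⊆ ⋃ i, F i →
      (∀ i, KQuasiPlane k (F i)) →
      ⌈(n : ℝ) / ((k : ℝ) - 1)⌉₊ ≤ c) := by
  obtain ⟨S, hS, rfl⟩ := hcf
  obtain ⟨m, rfl⟩ : ∃ m, k = m + 1 := ⟨k - 1, by omega⟩
  rw [Nat.cast_add_one, add_sub_cancel_right]
  have hceil (c : ℕ) : ⌈(S.card : ℝ) / m⌉₊ ≤ c ↔ S.card ≤ c * m :=
    ceil_div_le_iff_le_mul (by omega)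
  constructor
  · have hblocks : Fintype.card S ≤ ⌈(S.card : ℝ) / m⌉₊ * m := by
      simpa using (hceil _).1 le_rfl
    simpa only [mul_one] using exists_kQuasiPlane_partition
      (fun e : S => kQuasiPlane_two_doubleStar e)
      (hS.kEdges_subset_iUnion_doubleStar hP hcard.le) hblocks
  · intro c F hcover hF
    have hsub : (S : Set (Sym2 Pt)) ⊆ ⋃ i ∈ Finset.univ, F i := by
      simpa using hS.1.trans hcover
    simpa [hceil] using
      card_le_mul_of_subset_biUnion_kQuasiPlane (fun i _ => hF i) hsub hS.2

/-- for `2n` points in general position admitting a crossing family of size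
`n` and `k ≥ 3`, `K(P)` can be partitioned into `⌈n/(k-1)⌉` `k`-quasi-plane classes, and
every partition of `K(P)` into `k`-quasi-plane classes uses at least `⌈n/(k-1)⌉` classes. -/
theorem stmt_13 (n : ℕ) (P : Finset Pt) (hP : GenPos P) (hcard : P.card = 2 * n)
    (hcf : ∃ S : Finset (Sym2 Pt), CrossingFamily P S ∧ S.card = n)
    (k : ℕ) (hk3 : 3 ≤ k) :
    (∃ F : Fin (⌈(n : ℝ) / ((k : ℝ) - 1)⌉₊) → Set (Sym2 Pt),
      (⋃ i, F i) = KEdges P ∧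
      (Pairwise fun i j => Disjoint (F i) (F j)) ∧
      (∀ i, KQuasiPlane k (F i))) ∧
    (∀ (c : ℕ) (F : Fin c → Set (Sym2 Pt)),
      (⋃ i, F i) = KEdges P →
      (Pairwise fun i j => Disjoint (F i) (F j)) →
      (∀ i, KQuasiPlane k (F i)) →
      ⌈(n : ℝ) / ((k : ℝ) - 1)⌉₊ ≤ c) := by
  obtain ⟨hupper, hlower⟩ := stmt_13_general n P hP hcard hcf k (by omega)
  exact ⟨hupper, fun c F hcover _ => hlower c F hcover.ge⟩
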